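/- arXiv:0704.1696 — 3 statements merged into one kernel-verified Lean document; each statement's English description precedes it below -/
import Mathlib

section
/- Let n ≥ 2, let Λ : ℕ → [0,1] be nonincreasing with Λ(0) = 1, and let ε ∈ (0,1). For every state m ∈ [0,1]^n with 0 < m_1 < m_2 < … < m_n < 1 and every input x ∈ [0,1], the updated state T_ε(m,x) again satisfies 0 < T_ε(m,x)_1 < T_ε(m,x)_2 < … < T_ε(m,x)_n < 1; symmetrically, if 0 < m_n < m_{n−1} < … < m_1 < 1 then T_ε(m,x) satisfies 0 < T_ε(m,x)_n < … < T_ε(m,x)_1 < 1. In other words, the sets F_n^+ and F_n^− are absorbing for the one-dimensional SOM update. -/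
open MeasureTheory Set Filter Topology
open scoped Classical

noncomputable section

/-- The winning unit: the smallest index `i` minimizing `|x - m i|`. -/
def winner {n : ℕ} [NeZero n] (m : Fin n → ℝ) (x : ℝ) : Fin n :=
  (Finset.univ.filter fun i : Fin n => ∀ j, |x - m i| ≤ |x - m j|).min'
    (by
      obtain ⟨i, -, hi⟩ := Finset.exists_min_image (Finset.univ : Finset (Fin n))
        (fun i => |x - m i|) ⟨0, Finset.mem_univ _⟩
      exact ⟨i, Finset.mem_filter.mpr ⟨Finset.mem_univ _,
        fun j => hi j (Finset.mem_univ _)⟩⟩)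

/-- One step of the one-dimensional SOM algorithm with gain `ε` and
neighborhood function `Λ` : `T_ε(m,x)_i = m_i - ε Λ(|i - i₀(x,m)|)(m_i - x)`. -/
def somUpdate {n : ℕ} [NeZero n] (Λ : ℕ → ℝ) (ε : ℝ) (m : Fin n → ℝ) (x : ℝ) :
    Fin n → ℝ :=
  fun i => m i - ε * Λ (Nat.dist i.1 (winner m x).1) * (m i - x)

/-- `F_n^+` : increasingly ordered states with values in `(0,1)`. -/
def Fplus (n : ℕ) : Set (Fin n → ℝ) :=
  {m | StrictMono m ∧ ∀ i, m i ∈ Set.Ioo (0 : ℝ) 1}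

/-- `F_n^-` : decreasingly ordered states with values in `(0,1)`. -/
def Fminus (n : ℕ) : Set (Fin n → ℝ) :=
  {m | StrictAnti m ∧ ∀ i, m i ∈ Set.Ioo (0 : ℝ) 1}

theorem winner_le {n : ℕ} [NeZero n] (m : Fin n → ℝ) (x : ℝ) (j : Fin n) :
    |x - m (winner m x)| ≤ |x - m j| := by
  have h := Finset.min'_mem (Finset.univ.filter fun i : Fin n => ∀ j, |x - m i| ≤ |x - m j|)
    (by
      obtain ⟨i, -, hi⟩ := Finset.exists_min_image (Finset.univ : Finset (Fin n))
        (fun i => |x - m i|) ⟨0, Finset.mem_univ _⟩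
      exact ⟨i, Finset.mem_filter.mpr ⟨Finset.mem_univ _,
        fun j => hi j (Finset.mem_univ _)⟩⟩)
  exact (Finset.mem_filter.mp h).2 j

theorem upd_lt (p q u v x : ℝ) (hp0 : 0 ≤ p) (hp : p < 1) (hq0 : 0 ≤ q) (hq : q < 1)
    (huv : u < v) (h1 : v ≤ x → p ≤ q) (h2 : x ≤ u → q ≤ p) :
    u - p * (u - x) < v - q * (v - x) := by
  rcases le_total v x with h | h
  · have := h1 h
    nlinarith [mul_nonneg (sub_nonneg.2 this) (sub_nonneg.2 h),
      mul_pos (sub_pos.2 hp) (sub_pos.2 huv)]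
  · rcases le_total x u with h' | h'
    · have := h2 h'
      nlinarith [mul_nonneg (sub_nonneg.2 this) (sub_nonneg.2 h'),
        mul_pos (sub_pos.2 hq) (sub_pos.2 huv)]
    · rcases h.lt_or_eq with h3 | h3
      · nlinarith [mul_nonneg (sub_pos.2 hp).le (sub_nonneg.2 h'),
          mul_pos (sub_pos.2 hq) (sub_pos.2 h3)]
      · subst h3
        nlinarith [mul_pos (sub_pos.2 hp) (sub_pos.2 huv)]

theorem upd_mem (p u x : ℝ) (hp0 : 0 ≤ p) (hp : p < 1) (hu : u ∈ Set.Ioo (0 : ℝ) 1)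
    (hx : x ∈ Set.Icc (0 : ℝ) 1) : u - p * (u - x) ∈ Set.Ioo (0 : ℝ) 1 := by
  obtain ⟨a, b⟩ := hu
  obtain ⟨c, d⟩ := hx
  constructor
  · nlinarith [mul_pos (sub_pos.2 hp) a, mul_nonneg hp0 c]
  · nlinarith [mul_pos (sub_pos.2 hp) (sub_pos.2 b), mul_nonneg hp0 (sub_nonneg.2 d)]

/-- For `n ≥ 2`, a nonincreasing neighborhood function
`Λ : ℕ → [0,1]` with `Λ 0 = 1`, and a gain `ε ∈ (0,1)`, the sets `F_n^+` and
`F_n^-` are absorbing for the one-dimensional SOM update: for every state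
`m` in `F_n^+` (resp. `F_n^-`) and every input `x ∈ [0,1]`, the updated state
`T_ε(m,x)` again belongs to `F_n^+` (resp. `F_n^-`). -/
theorem som_Fplus_Fminus_absorbing {n : ℕ} [NeZero n] (hn : 2 ≤ n)
    (Λ : ℕ → ℝ) (hΛanti : Antitone Λ) (hΛ0 : Λ 0 = 1)
    (hΛrange : ∀ k, Λ k ∈ Set.Icc (0 : ℝ) 1)
    (ε : ℝ) (hε : ε ∈ Set.Ioo (0 : ℝ) 1)
    (x : ℝ) (hx : x ∈ Set.Icc (0 : ℝ) 1) :
    (∀ m ∈ Fplus n, somUpdate Λ ε m x ∈ Fplus n) ∧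
    (∀ m ∈ Fminus n, somUpdate Λ ε m x ∈ Fminus n) := by
  have hp0 : ∀ k, 0 ≤ ε * Λ k := fun k => mul_nonneg hε.1.le (hΛrange k).1
  have hp1 : ∀ k, ε * Λ k < 1 := fun k => by nlinarith [hε.1, hε.2, (hΛrange k).2]
  have hmono : ∀ a b, a ≤ b → ε * Λ b ≤ ε * Λ a :=
    fun a b h => mul_le_mul_of_nonneg_left (hΛanti h) hε.1.le
  have hlo : ∀ (m : Fin n → ℝ) (j : Fin n), m j ≤ x → m j ≤ m (winner m x) := by
    intro m j h
    have h1 := winner_le m x j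
    rw [abs_of_nonneg (sub_nonneg.2 h)] at h1
    linarith [le_abs_self (x - m (winner m x))]
  have hhi : ∀ (m : Fin n → ℝ) (j : Fin n), x ≤ m j → m (winner m x) ≤ m j := by
    intro m j h
    have h1 := winner_le m x j
    rw [abs_of_nonpos (sub_nonpos.2 h)] at h1
    linarith [neg_abs_le (x - m (winner m x))]
  refine ⟨fun m hm => ⟨fun i j hij => ?_, fun i => upd_mem _ _ _ (hp0 _) (hp1 _) (hm.2 i) hx⟩,
    fun m hm => ⟨fun i j hij => ?_, fun i => upd_mem _ _ _ (hp0 _) (hp1 _) (hm.2 i) hx⟩⟩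
  · refine upd_lt _ _ _ _ _ (hp0 _) (hp1 _) (hp0 _) (hp1 _) (hm.1 hij)
      (fun h => hmono _ _ ?_) (fun h => hmono _ _ ?_)
    · have h1 := hm.1.le_iff_le.1 (hlo m j h)
      simp only [Nat.dist]
      omega
    · have h1 := hm.1.le_iff_le.1 (hhi m i h)
      simp only [Nat.dist]
      omega
  · refine upd_lt _ _ _ _ _ (hp0 _) (hp1 _) (hp0 _) (hp1 _) (hm.1 hij)
      (fun h => hmono _ _ ?_) (fun h => hmono _ _ ?_)
    · have h1 := hm.1.le_iff_ge.1 (hlo m i h)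
      simp only [Nat.dist]
      omega
    · have h1 := hm.1.le_iff_ge.1 (hhi m j h)
      simp only [Nat.dist]
      omega

end
end

section
/- Let n ≥ 2, let Λ : ℕ → [0,1] be nonincreasing with Λ(0) = 1 and satisfying hypothesis H_Λ, and let μ be a probability measure on [0,1] satisfying hypothesis H_μ with density f. Then the mean field h of the one-dimensional SOM algorithm has a unique zero m★ in the open set F_n^+. -/
open MeasureTheory Set Filter Topology
open scoped Classical ENNReal

noncomputable section

/-- The Voronoi boundary points `x_0 = 0`, `x_j = (m_j + m_{j+1})/2`
(`1 ≤ j ≤ n-1`, in 0-based indexing `x_j = (m_{j-1} + m_j)/2`), `x_n = 1`. -/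
def somBnd {n : ℕ} (m : Fin n → ℝ) (j : ℕ) : ℝ :=
  if j = 0 then 0
  else if h : j < n then
    (m ⟨j - 1, lt_of_le_of_lt (Nat.sub_le j 1) h⟩ + m ⟨j, h⟩) / 2
  else 1

/-- The mean field of the one-dimensional SOM algorithm for the input density
`f` : `h_i(m) = Σ_j Λ(|i-j|) ∫_{C_j(m)} (m_i - x) f(x) dx`, where `C_j(m)` is
the `j`-th Voronoi interval of `m`. -/
def meanField {n : ℕ} (Λ : ℕ → ℝ) (f : ℝ → ℝ) (m : Fin n → ℝ) : Fin n → ℝ :=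
  fun i => ∑ j : Fin n, Λ (Nat.dist i.1 j.1) *
    ∫ x in Set.Icc (somBnd m j.1) (somBnd m (j.1 + 1)), (m i - x) * f x

/-- Hypothesis `H_Λ` : there is an integer `k₀ < (n-1)/2` with
`Λ(k₀+1) < Λ(k₀)`. -/
def HLambda (n : ℕ) (Λ : ℕ → ℝ) : Prop :=
  ∃ k₀ : ℕ, 2 * k₀ + 1 < n ∧ Λ (k₀ + 1) < Λ k₀

/-- Hypothesis `H_μ` on the density `f` : `f > 0` on `(0,1)` and `log f`
strictly concave on `(0,1)` (or `log f` concave together with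
`lim_{0+} f + lim_{1-} f > 0`). -/
def Hmu (f : ℝ → ℝ) : Prop :=
  (∀ x ∈ Set.Ioo (0 : ℝ) 1, 0 < f x) ∧
  (StrictConcaveOn ℝ (Set.Ioo (0 : ℝ) 1) (fun x => Real.log (f x)) ∨
    (ConcaveOn ℝ (Set.Ioo (0 : ℝ) 1) (fun x => Real.log (f x)) ∧
      ∃ a b : ℝ, Tendsto f (nhdsWithin 0 (Set.Ioi 0)) (nhds a) ∧
        Tendsto f (nhdsWithin 1 (Set.Iio 1)) (nhds b) ∧ 0 < a + b))

def Nc (n : ℕ) (M : ℕ → ℝ) (x : ℝ) : ℕ :=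
  ((Finset.Ico 1 n).filter (fun k => (M (k-1) + M k)/2 < x)).card

def vv (Λ : ℕ → ℝ) (n : ℕ) (M : ℕ → ℝ) (i : ℕ) (x : ℝ) : ℝ :=
  M i + Λ (Nat.dist i (Nc n M x)) * (x - M i)

lemma Nc_le {n : ℕ} {M : ℕ → ℝ} (hM : Monotone M) {x : ℝ} {j : ℕ} 
    (h : j + 1 < n → x ≤ (M j + M (j+1))/2) : Nc n M x ≤ j := by
  unfold Nc
  have : (Finset.Ico 1 n).filter (fun k => (M (k-1) + M k)/2 < x) ⊆ Finset.Ico 1 (j+1) := by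
    intro k hk
    simp only [Finset.mem_filter, Finset.mem_Ico] at hk ⊢
    refine ⟨hk.1.1, ?_⟩
    by_contra hc
    have h1 := h (by omega)
    have h2 := hM (show j ≤ k - 1 by omega)
    have h3 := hM (show j + 1 ≤ k by omega)
    linarith [hk.2]
  simpa using Finset.card_le_card this

lemma le_Nc {n : ℕ} {M : ℕ → ℝ} (hM : Monotone M) {x : ℝ} {j : ℕ} (hj : j < n)
    (h : 1 ≤ j → (M (j-1) + M j)/2 < x) : j ≤ Nc n M x := by
  unfold Nc
  have : Finset.Ico 1 (j+1) ⊆ (Finset.Ico 1 n).filter (fun k => (M (k-1) + M k)/2 < x) := by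
    intro k hk
    simp only [Finset.mem_filter, Finset.mem_Ico] at hk ⊢
    refine ⟨⟨hk.1, by omega⟩, ?_⟩
    have h1 := h (by omega)
    have h2 := hM (show k - 1 ≤ j - 1 by omega)
    have h3 := hM (show k ≤ j by omega)
    linarith
  simpa using Finset.card_le_card this

lemma Nc_le_of_lt {n : ℕ} {M : ℕ → ℝ} (hM : Monotone M) {x : ℝ} {j : ℕ} (h : x < M j) :
    Nc n M x ≤ j := by
  refine Nc_le hM (fun _ => ?_)
  have := hM (show j ≤ j + 1 by omega)
  linarith

lemma le_Nc_of_lt {n : ℕ} {M : ℕ → ℝ} (hM : Monotone M) {x : ℝ} {j : ℕ} (hj : j < n)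
    (h : M j < x) : j ≤ Nc n M x := by
  refine le_Nc hM hj (fun _ => ?_)
  have := hM (show j - 1 ≤ j by omega)
  linarith

lemma Nc_anti {n : ℕ} {M M' : ℕ → ℝ} (h : M ≤ M') (x : ℝ) : Nc n M' x ≤ Nc n M x := by
  unfold Nc
  refine Finset.card_le_card (Finset.monotone_filter_right _ ?_)
  intro k _ hk
  have h1 := h k
  have h2 := h (k-1)
  simp only at h1 h2 hk ⊢
  linarith

lemma Nc_mono (n : ℕ) (M : ℕ → ℝ) : Monotone (Nc n M) := by
  intro x y hxy
  unfold Nc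
  refine Finset.card_le_card (Finset.monotone_filter_right _ ?_)
  intro k _ hk
  exact lt_of_lt_of_le hk hxy

lemma Nc_shift (n : ℕ) (M : ℕ → ℝ) (δ x : ℝ) : Nc n (fun k => M k + δ) x = Nc n M (x - δ) := by
  unfold Nc
  congr 1
  refine Finset.filter_congr (fun k _ => ?_)
  constructor <;> intro h <;> linarith

section ord
variable {Λ : ℕ → ℝ} (hΛ : Antitone Λ) (hr : ∀ k, Λ k ∈ Set.Icc (0 : ℝ) 1)
include hr

lemma vv_le_max {n : ℕ} {M : ℕ → ℝ} (i : ℕ) (x : ℝ) : vv Λ n M i x ≤ max (M i) x := by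
  unfold vv
  have := hr (Nat.dist i (Nc n M x))
  rcases le_total (M i) x with h | h
  · rw [max_eq_right h]; nlinarith [this.1, this.2]
  · rw [max_eq_left h]; nlinarith [this.1, this.2]

lemma min_le_vv {n : ℕ} {M : ℕ → ℝ} (i : ℕ) (x : ℝ) : min (M i) x ≤ vv Λ n M i x := by
  unfold vv
  have := hr (Nat.dist i (Nc n M x))
  rcases le_total (M i) x with h | h
  · rw [min_eq_left h]; nlinarith [this.1, this.2]
  · rw [min_eq_right h]; nlinarith [this.1, this.2]

include hΛ

lemma vv_mono {n : ℕ} {M M' : ℕ → ℝ} (hM : Monotone M) (hM' : Monotone M') (h : M ≤ M')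
    {i : ℕ} (hi : i < n) (x : ℝ) : vv Λ n M i x ≤ vv Λ n M' i x := by
  have hN := Nc_anti (n := n) h x
  have hii : M i ≤ M' i := h i
  rcases lt_or_ge x (M i) with h1 | h1
  · have a := Nc_le_of_lt (n := n) hM h1
    have : Λ (Nat.dist i (Nc n M' x)) ≤ Λ (Nat.dist i (Nc n M x)) :=
      hΛ (by unfold Nat.dist; omega)
    have b := hr (Nat.dist i (Nc n M' x))
    unfold vv
    nlinarith [b.1, b.2]
  rcases lt_or_ge (M' i) x with h2 | h2
  · have a := le_Nc_of_lt hM' hi h2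
    have : Λ (Nat.dist i (Nc n M x)) ≤ Λ (Nat.dist i (Nc n M' x)) :=
      hΛ (by unfold Nat.dist; omega)
    have b := hr (Nat.dist i (Nc n M x))
    unfold vv
    nlinarith [b.1, b.2]
  · have a := vv_le_max hr (n := n) (M := M) i x
    have b := min_le_vv hr (n := n) (M := M') i x
    rw [max_eq_right h1] at a
    rw [min_eq_right h2] at b
    exact a.trans b

lemma vv_ord {n : ℕ} {M : ℕ → ℝ} (hM : Monotone M) 
    {i j : ℕ} (hij : i ≤ j) (hj : j < n) (x : ℝ) : vv Λ n M i x ≤ vv Λ n M j x := by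
  have hii : M i ≤ M j := hM hij
  rcases lt_or_ge x (M i) with h1 | h1
  · have a := Nc_le_of_lt (n := n) hM h1
    have : Λ (Nat.dist j (Nc n M x)) ≤ Λ (Nat.dist i (Nc n M x)) :=
      hΛ (by unfold Nat.dist; omega)
    have b := hr (Nat.dist j (Nc n M x))
    unfold vv
    nlinarith [b.1, b.2]
  rcases lt_or_ge (M j) x with h2 | h2
  · have a := le_Nc_of_lt hM hj h2
    have : Λ (Nat.dist i (Nc n M x)) ≤ Λ (Nat.dist j (Nc n M x)) :=
      hΛ (by unfold Nat.dist; omega)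
    have b := hr (Nat.dist i (Nc n M x))
    unfold vv
    nlinarith [b.1, b.2]
  · have a := vv_le_max hr (n := n) (M := M) i x
    have b := min_le_vv hr (n := n) (M := M) j x
    rw [max_eq_right h1] at a
    rw [min_eq_right h2] at b
    exact a.trans b
end ord

lemma measurable_LN (Λ : ℕ → ℝ) (n : ℕ) (M : ℕ → ℝ) (i : ℕ) :
    Measurable (fun x => Λ (Nat.dist i (Nc n M x))) :=
  (measurable_from_top (f := fun k => Λ (Nat.dist i k))).comp (Nc_mono n M).measurable

lemma measurable_vv (Λ : ℕ → ℝ) (n : ℕ) (M : ℕ → ℝ) (i : ℕ) :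
    Measurable (vv Λ n M i) := by
  unfold vv
  exact measurable_const.add ((measurable_LN Λ n M i).mul (measurable_id.sub_const _))

section meas
variable {μ : Measure ℝ} [IsProbabilityMeasure μ] {g : ℝ → ℝ} (hg : Measurable g)
  (hgpos : ∀ x ∈ Set.Ioo (0:ℝ) 1, 0 < g x) (hg0 : ∀ x ∉ Set.Ioo (0:ℝ) 1, g x = 0)
  (hd : μ = volume.withDensity fun x => ENNReal.ofReal (g x))
include hgpos hg0

lemma g_nonneg (x : ℝ) : 0 ≤ g x := by
  by_cases h : x ∈ Set.Ioo (0:ℝ) 1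
  · exact (hgpos x h).le
  · exact (hg0 x h).ge

include hg hd

lemma g_int : Integrable g := by
  refine ⟨hg.aestronglyMeasurable, ?_⟩
  rw [hasFiniteIntegral_iff_ofReal (ae_of_all _ (g_nonneg hgpos hg0))]
  have : μ univ = 1 := measure_univ
  rw [hd, withDensity_apply _ MeasurableSet.univ, Measure.restrict_univ] at this
  rw [this]; exact ENNReal.one_lt_top

lemma int_mu (w : ℝ → ℝ) : ∫ x, w x ∂μ = ∫ x, g x * w x := by
  rw [hd, integral_withDensity_eq_integral_toReal_smul (hg.ennreal_ofReal) (by simp)]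
  refine integral_congr_ae (ae_of_all _ fun x => ?_)
  simp [ENNReal.toReal_ofReal (g_nonneg hgpos hg0 x)]

lemma ae_mem : ∀ᵐ x ∂μ, x ∈ Set.Ioo (0:ℝ) 1 := by
  rw [hd, ae_withDensity_iff hg.ennreal_ofReal]
  refine ae_of_all _ fun x hx => ?_
  by_contra h
  rw [hg0 x h] at hx
  simp at hx

lemma mu_pos {p q : ℝ} (hp : 0 ≤ p) (hpq : p < q) (hq : q ≤ 1) : μ (Set.Ioo p q) ≠ 0 := by
  rw [hd, withDensity_apply _ measurableSet_Ioo]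
  intro h
  rw [lintegral_eq_zero_iff hg.ennreal_ofReal] at h
  have h2 : ∀ᵐ x ∂(volume.restrict (Set.Ioo p q)), False := by
    filter_upwards [h, ae_restrict_mem measurableSet_Ioo] with x hx hx2
    have := hgpos x ⟨by linarith [hx2.1], by linarith [hx2.2]⟩
    simp at hx
    linarith
  simp only [eventually_false_iff_eq_bot, ae_eq_bot, Measure.restrict_eq_zero, Real.volume_Ioo] at h2
  simp at h2
  linarith

lemma int_lt {w w' : ℝ → ℝ} (hw : Integrable w μ) (hw' : Integrable w' μ)
    (hle : ∀ x ∈ Set.Ioo (0:ℝ) 1, w x ≤ w' x) {p q : ℝ} (hp : 0 ≤ p) (hpq : p < q) (hq : q ≤ 1)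
    (hlt : ∀ x ∈ Set.Ioo p q, w x < w' x) : ∫ x, w x ∂μ < ∫ x, w' x ∂μ := by
  have h0 : 0 ≤ᵐ[μ] fun x => w' x - w x := by
    filter_upwards [ae_mem hg hgpos hg0 hd] with x hx
    have := hle x hx
    simp only [Pi.zero_apply]
    linarith
  have := (integral_pos_iff_support_of_nonneg_ae h0 (hw'.sub hw)).2 (by
    refine lt_of_lt_of_le (pos_iff_ne_zero.2 (mu_pos hg hgpos hg0 hd hp hpq hq)) (measure_mono ?_)
    intro x hx
    have := hlt x hx
    simp only [Function.mem_support]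
    linarith)
  rw [integral_sub hw' hw] at this
  linarith

variable {Λ : ℕ → ℝ} (hr : ∀ k, Λ k ∈ Set.Icc (0 : ℝ) 1)
include hr

lemma vv_int (n : ℕ) (M : ℕ → ℝ) (i : ℕ) : Integrable (vv Λ n M i) μ := by
  refine Integrable.of_bound (measurable_vv Λ n M i).aestronglyMeasurable (|M i| + 1) ?_
  filter_upwards [ae_mem hg hgpos hg0 hd] with x hx
  have a := vv_le_max hr (n := n) (M := M) i x
  have b := min_le_vv hr (n := n) (M := M) i x
  rw [Real.norm_eq_abs, abs_le]
  have h1 : max (M i) x ≤ |M i| + 1 :=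
    max_le (by linarith [le_abs_self (M i)]) (by linarith [hx.2, abs_nonneg (M i)])
  have h2 : -(|M i| + 1) ≤ min (M i) x :=
    le_min (by linarith [neg_abs_le (M i)]) (by linarith [hx.1, abs_nonneg (M i)])
  exact ⟨h2.trans b, a.trans h1⟩

end meas

section fixp
variable {μ : Measure ℝ} [IsProbabilityMeasure μ] {g : ℝ → ℝ} (hg : Measurable g)
  (hgpos : ∀ x ∈ Set.Ioo (0:ℝ) 1, 0 < g x) (hg0 : ∀ x ∉ Set.Ioo (0:ℝ) 1, g x = 0)
  (hd : μ = volume.withDensity fun x => ENNReal.ofReal (g x))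
  {Λ : ℕ → ℝ} (hr : ∀ k, Λ k ∈ Set.Icc (0 : ℝ) 1) (hΛ : Antitone Λ) (hΛ0 : Λ 0 = 1)
  {n : ℕ} {M : ℕ → ℝ} (hM : Monotone M) (hM01 : ∀ i, M i ∈ Set.Icc (0:ℝ) 1)
  (hfix : ∀ i < n, ∫ x, vv Λ n M i x ∂μ = M i)

include hg hgpos hg0 hd hr hΛ0 hM hM01 hfix

lemma fix_pos : ∀ i < n, 0 < M i := by
  by_contra! hc
  obtain ⟨i, hi, hMi⟩ := hc
  have hMi0 : M i = 0 := le_antisymm hMi (hM01 i).1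
  let S := (Finset.range n).filter (fun k => M k = 0)
  have hS : S.Nonempty := ⟨i, by simp [S, hi, hMi0]⟩
  obtain ⟨p, hpS, hpmax⟩ := S.exists_max_image id hS
  simp only [S, Finset.mem_filter, Finset.mem_range, id] at hpS hpmax
  obtain ⟨q, hq0, hq1, hq⟩ : ∃ q : ℝ, 0 < q ∧ q ≤ 1 ∧ (p + 1 < n → q ≤ (M p + M (p+1))/2) := by
    by_cases h : p + 1 < n
    · have : M (p+1) ≠ 0 := fun h0 => by
        have := hpmax (p+1) ⟨h, h0⟩
        omega
      have h1 := hM01 (p+1)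
      have : 0 < M (p+1) := lt_of_le_of_ne h1.1 (Ne.symm this)
      exact ⟨(M p + M (p+1))/2, by linarith [hpS.2], by linarith [hpS.2, h1.2], fun _ => le_rfl⟩
    · exact ⟨1, one_pos, le_rfl, fun h' => absurd h' h⟩
  have := int_lt hg hgpos hg0 hd (w := fun _ => 0) (w' := vv Λ n M p) (integrable_const _)
    (vv_int hg hgpos hg0 hd hr n M p) (p := 0) (q := q) ?_ le_rfl hq0 hq1 ?_
  · rw [hfix p hpS.1, hpS.2] at this
    simp at this
  · intro x hx
    have := min_le_vv hr (n := n) (M := M) p x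
    rw [hpS.2, min_eq_left hx.1.le] at this
    exact this
  · intro x hx
    have h1 : Nc n M x ≤ p := Nc_le hM (fun h => hx.2.le.trans (hq h))
    have h2 : p ≤ Nc n M x := le_Nc_of_lt hM hpS.1 (by rw [hpS.2]; exact hx.1)
    have h3 : Nc n M x = p := le_antisymm h1 h2
    simp only [vv, h3, Nat.dist_self, hΛ0, hpS.2]
    linarith [hx.1]

lemma fix_lt : ∀ i < n, M i < 1 := by
  by_contra! hc
  obtain ⟨i, hi, hMi⟩ := hc
  have hMi0 : M i = 1 := le_antisymm (hM01 i).2 hMi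
  let S := (Finset.range n).filter (fun k => M k = 1)
  have hS : S.Nonempty := ⟨i, by simp [S, hi, hMi0]⟩
  obtain ⟨p, hpS, hpmin⟩ := S.exists_min_image id hS
  simp only [S, Finset.mem_filter, Finset.mem_range, id] at hpS hpmin
  obtain ⟨q, hq0, hq1, hq⟩ : ∃ q : ℝ, 0 ≤ q ∧ q < 1 ∧ (1 ≤ p → (M (p-1) + M p)/2 ≤ q) := by
    by_cases h : 1 ≤ p
    · have : M (p-1) ≠ 1 := fun h0 => by
        have := hpmin (p-1) ⟨by omega, h0⟩
        omega
      have h1 := hM01 (p-1)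
      have : M (p-1) < 1 := lt_of_le_of_ne h1.2 this
      exact ⟨(M (p-1) + M p)/2, by linarith [hpS.2, h1.1], by linarith [hpS.2, h1.2], fun _ => le_rfl⟩
    · exact ⟨0, le_rfl, one_pos, fun h' => absurd h' h⟩
  have := int_lt hg hgpos hg0 hd (w' := fun _ => 1) (w := vv Λ n M p) 
    (vv_int hg hgpos hg0 hd hr n M p) (integrable_const _) (p := q) (q := 1) ?_ hq0 hq1 le_rfl ?_
  · rw [hfix p hpS.1, hpS.2] at this
    simp at this
  · intro x hx
    have := vv_le_max hr (n := n) (M := M) p x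
    rw [hpS.2, max_eq_left hx.2.le] at this
    exact this
  · intro x hx
    have h1 : p ≤ Nc n M x := le_Nc hM hpS.1 (fun h => (hq h).trans_lt hx.1)
    have h2 : Nc n M x ≤ p := Nc_le_of_lt hM (by rw [hpS.2]; exact hx.2)
    have h3 : Nc n M x = p := le_antisymm h2 h1
    simp only [vv, h3, Nat.dist_self, hΛ0, hpS.2]
    linarith [hx.2]

include hΛ

/-- interval of a nonempty cell -/
lemma fix_tie {i k : ℕ} (hi : i + 1 < n) (hk : k < n) (ht : M i = M (i+1))
    (hne : Λ (Nat.dist i k) ≠ Λ (Nat.dist (i+1) k)) :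
    1 ≤ k ∧ k + 1 < n ∧ M (k-1) = M k ∧ M k = M (k+1) := by
  by_contra hc
  have hp := fix_pos hg hgpos hg0 hd hr hΛ0 hM hM01 hfix
  have hl := fix_lt hg hgpos hg0 hd hr hΛ0 hM hM01 hfix
  have m1 := hM (show k - 1 ≤ k by omega)
  have m2 := hM (show k ≤ k + 1 by omega)
  have m0 := hM01 (k-1)
  have m3 := hM01 (k+1)
  have m4 := hM01 k
  obtain ⟨p, q, hp0, hpq, hq1, h1, h2, hpi⟩ : ∃ p q : ℝ, 0 ≤ p ∧ p < q ∧ q ≤ 1 ∧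
      (1 ≤ k → (M (k-1) + M k)/2 ≤ p) ∧ (k + 1 < n → q ≤ (M k + M (k+1))/2) ∧
      (q ≤ M i ∨ M i ≤ p) := by
    by_cases a : 1 ≤ k
    · by_cases b : k + 1 < n
      · have hlt : (M (k-1) + M k)/2 < (M k + M (k+1))/2 := by
          by_contra hx
          exact hc ⟨a, b, by linarith, by linarith⟩
        refine ⟨_, _, by linarith [m0.1, m4.1], hlt, by linarith [m3.2, m4.2], fun _ => le_rfl,
          fun _ => le_rfl, ?_⟩
        by_cases hki : k ≤ i
        · left
          have := hM (show k + 1 ≤ i + 1 by omega)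
          linarith
        · right
          have := hM (show i + 1 ≤ k by omega)
          have := hM (show i ≤ k - 1 by omega)
          linarith
      · refine ⟨(M (k-1) + M k)/2, 1, by linarith [m0.1, m4.1], ?_, le_rfl, fun _ => le_rfl,
          fun h => absurd h b, Or.inr ?_⟩
        · have := hl k hk
          linarith
        · have := hM (show i ≤ k - 1 by omega)
          linarith
    · have hk0 : k = 0 := by omega
      subst hk0
      refine ⟨0, (M 0 + M (0+1))/2, le_rfl, ?_, by linarith [m3.2, m4.2], fun h => absurd h a,
        fun _ => le_rfl, Or.inl ?_⟩
      · have := hp 0 hk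
        linarith
      · have := hM (show 0 + 1 ≤ i + 1 by omega)
        linarith
  have := int_lt hg hgpos hg0 hd (w := vv Λ n M i) (w' := vv Λ n M (i+1)) 
    (vv_int hg hgpos hg0 hd hr n M i) (vv_int hg hgpos hg0 hd hr n M (i+1))
    (fun x _ => vv_ord hΛ hr hM (by omega) hi x) hp0 hpq hq1 ?_
  · rw [hfix i (by omega), hfix (i+1) hi, ht] at this
    exact lt_irrefl _ this
  · intro x hx
    refine lt_of_le_of_ne (vv_ord hΛ hr hM (by omega) hi x) ?_
    have h3 : Nc n M x = k := le_antisymm (Nc_le hM (fun h => hx.2.le.trans (h2 h)))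
      (le_Nc hM hk (fun h => (h1 h).trans_lt hx.1))
    simp only [vv, h3, ← ht]
    intro he
    have hxc : x - M i ≠ 0 := by
      rcases hpi with h | h
      · intro h0; linarith [hx.2]
      · intro h0; linarith [hx.1]
    exact hne (mul_right_cancel₀ hxc (by linarith))

lemma fix_strict {k₀ : ℕ} (hk : 2 * k₀ + 1 < n) (hk0 : Λ (k₀+1) < Λ k₀) :
    ∀ i, i + 1 < n → M i < M (i+1) := by
  have tie := fun {i k : ℕ} => fix_tie (i := i) (k := k) hg hgpos hg0 hd hr hΛ hΛ0 hM hM01 hfix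
  have L : ∀ i, i + 1 < n → k₀ ≤ i → M i = M (i+1) → False := by
    intro i
    induction i using Nat.strong_induction_on with
    | _ i ih =>
      intro hi hki ht
      have e1 : Nat.dist i (i-k₀) = k₀ := by unfold Nat.dist; omega
      have e2 : Nat.dist (i+1) (i-k₀) = k₀+1 := by unfold Nat.dist; omega
      obtain ⟨a, b, c, d⟩ := tie (k := i - k₀) hi (by omega) ht (by rw [e1, e2]; exact hk0.ne')
      have e0 : i - k₀ - 1 + 1 = i - k₀ := by omega
      have e3 : Nat.dist (i-k₀-1) i = k₀ + 1 := by unfold Nat.dist; omega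
      have e4 : Nat.dist (i-k₀) i = k₀ := by unfold Nat.dist; omega
      obtain ⟨a', b', c', d'⟩ := tie (i := i-k₀-1) (k := i) (by omega) (by omega)
        (by rw [e0]; exact c) (by rw [e0, e3, e4]; exact hk0.ne)
      refine ih (i-1) (by omega) (by omega) (by omega) ?_
      rw [show i - 1 + 1 = i by omega]; exact c'
  have R : ∀ j i, n - i = j → i + 1 + k₀ < n → M i = M (i+1) → False := by
    intro j
    induction j using Nat.strong_induction_on with
    | _ j ih =>
      intro i hj hki ht
      have e1 : Nat.dist i (i+1+k₀) = k₀+1 := by unfold Nat.dist; omega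
      have e2 : Nat.dist (i+1) (i+1+k₀) = k₀ := by unfold Nat.dist; omega
      obtain ⟨a, b, c, d⟩ := tie (k := i+1+k₀) (by omega) (by omega) ht
        (by rw [e1, e2]; exact hk0.ne)
      have e3 : Nat.dist (i+1+k₀) (i+1) = k₀ := by unfold Nat.dist; omega
      have e4 : Nat.dist (i+1+k₀+1) (i+1) = k₀+1 := by unfold Nat.dist; omega
      obtain ⟨a', b', c', d'⟩ := tie (i := i+1+k₀) (k := i+1) (by omega) (by omega)
        d (by rw [e3, e4]; exact hk0.ne')
      exact ih (n - (i+1)) (by omega) (i+1) rfl (by omega) d'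
  intro i hi
  refine lt_of_le_of_ne (hM (by omega)) (fun ht => ?_)
  by_cases h : k₀ ≤ i
  · exact L i hi h ht
  · exact R _ i rfl (by omega) ht
end fixp

section shift
variable {g : ℝ → ℝ} (hgi : Integrable g)
  (hgpos : ∀ x ∈ Set.Ioo (0:ℝ) 1, 0 < g x) (hg0 : ∀ x ∉ Set.Ioo (0:ℝ) 1, g x = 0)
  (hconc : ConcaveOn ℝ (Set.Ioo (0:ℝ) 1) (fun x => Real.log (g x)))
include hgpos hconc

lemma logconc {a b c d : ℝ} (ha : a ∈ Set.Ioo (0:ℝ) 1) (hd : d ∈ Set.Ioo (0:ℝ) 1)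
    (hab : a ≤ b) (hbd : b ≤ d) (hs : a + d = b + c) (had : a < d) : g a * g d ≤ g b * g c := by
  have hb : b ∈ Set.Ioo (0:ℝ) 1 := ⟨by linarith [ha.1], by linarith [hd.2]⟩
  have hc : c ∈ Set.Ioo (0:ℝ) 1 := ⟨by linarith [ha.1], by linarith [hd.2]⟩
  have hpos : 0 < d - a := by linarith
  have e1 : (d-b)/(d-a) + (b-a)/(d-a) = 1 := by field_simp; ring
  have n1 : 0 ≤ (d-b)/(d-a) := div_nonneg (by linarith) hpos.le
  have n2 : 0 ≤ (b-a)/(d-a) := div_nonneg (by linarith) hpos.le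
  have h1 := hconc.2 ha hd n1 n2 e1
  have h2 := hconc.2 ha hd n2 n1 (by linarith)
  have eb : ((d-b)/(d-a)) • a + ((b-a)/(d-a)) • d = b := by
    simp only [smul_eq_mul]; field_simp; ring
  have ec : ((b-a)/(d-a)) • a + ((d-b)/(d-a)) • d = c := by
    have : c = a + d - b := by linarith
    rw [this]
    simp only [smul_eq_mul]; field_simp; ring
  rw [eb] at h1
  rw [ec] at h2
  simp only [smul_eq_mul] at h1 h2
  have h3 : Real.log (g a) + Real.log (g d) ≤ Real.log (g b) + Real.log (g c) := by
    have e2 : (b-a)/(d-a) = 1 - (d-b)/(d-a) := by linarith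
    rw [e2] at h1 h2
    linarith
  rw [← Real.log_mul (hgpos a ha).ne' (hgpos d hd).ne',
    ← Real.log_mul (hgpos b hb).ne' (hgpos c hc).ne'] at h3
  exact (Real.log_le_log_iff (mul_pos (hgpos a ha) (hgpos d hd))
    (mul_pos (hgpos b hb) (hgpos c hc))).1 h3

include hg0

lemma shift_pt {c δ : ℝ} (hc : 0 < c) (hδ : 0 < δ) (hcδ : c + δ < 1) (y : ℝ) :
    0 ≤ (c - y) * (g (y+δ) - g (c+δ) / g c * g y) := by
  have hcm : c ∈ Set.Ioo (0:ℝ) 1 := ⟨hc, by linarith⟩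
  have hcm' : c + δ ∈ Set.Ioo (0:ℝ) 1 := ⟨by linarith, hcδ⟩
  have gc := hgpos c hcm
  have gcd := hgpos _ hcm'
  have gn := g_nonneg hgpos hg0
  have key : g (c+δ) / g c * g y = (g y * g (c+δ)) / g c := by ring
  rcases lt_trichotomy y c with h | h | h
  · refine mul_nonneg (by linarith) ?_
    by_cases hy : 0 < y
    · have := logconc hgpos hconc (a := y) (d := c+δ) (b := y+δ) (c := c)
        ⟨hy, by linarith⟩ hcm' (by linarith) (by linarith) (by ring) (by linarith)
      rw [key, sub_nonneg, div_le_iff₀ gc]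
      exact this
    · rw [hg0 y (fun h' => hy h'.1)]
      simpa using gn (y+δ)
  · subst h; simp
  · refine mul_nonneg_of_nonpos_of_nonpos (by linarith) ?_
    by_cases hy : y + δ < 1
    · have := logconc hgpos hconc (a := c) (d := y+δ) (b := y) (c := c+δ)
        hcm ⟨by linarith, hy⟩ (by linarith) (by linarith) (by ring) (by linarith)
      rw [key, sub_nonpos, le_div_iff₀ gc]
      linarith
    · rw [hg0 (y+δ) (fun h' => hy h'.2)]
      have := mul_nonneg (div_pos gcd gc).le (gn y)
      linarith

omit hconc hgpos in
include hgi in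
lemma cg_int (c : ℝ) : Integrable (fun x => (c - x) * g x) := by
  have : Integrable (fun x => x * g x) := by
    refine hgi.mono (measurable_id.aestronglyMeasurable.mul hgi.1) (ae_of_all _ fun x => ?_)
    by_cases h : x ∈ Set.Ioo (0:ℝ) 1
    · rw [norm_mul]
      refine mul_le_of_le_one_left (norm_nonneg _) ?_
      rw [Real.norm_eq_abs, abs_le]
      exact ⟨by linarith [h.1], h.2.le⟩
    · simp [hg0 x h]
  have h2 := (hgi.const_mul c).sub this
  refine h2.congr (ae_of_all _ fun x => ?_)
  simp; ring

include hgi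

lemma shift_int {c δ : ℝ} (hc : 0 < c) (hδ : 0 < δ) (hcδ : c + δ < 1) {G : ℝ → ℝ}
    (hG : Measurable G) (hG01 : ∀ x, G x ∈ Set.Icc (0:ℝ) 1)
    (h0 : ∫ x, G x * ((c - x) * g x) = 0) :
    0 ≤ ∫ x, G (x-δ) * ((c + δ - x) * g x) ∧
    ∀ p < 1, (∀ x, p < x → 0 < G x) → 0 < ∫ x, G (x-δ) * ((c + δ - x) * g x) := by
  have e1 : ∫ x, G (x-δ) * ((c + δ - x) * g x) = ∫ y, G y * ((c - y) * g (y+δ)) := by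
    rw [← integral_add_right_eq_self (fun x => G (x-δ) * ((c + δ - x) * g x)) δ]
    refine integral_congr_ae (ae_of_all _ fun x => ?_)
    simp
  have bdd : ∀ᵐ x, ‖G x‖ ≤ 1 := ae_of_all _ fun x => by
    rw [Real.norm_eq_abs, abs_le]
    exact ⟨by linarith [(hG01 x).1], (hG01 x).2⟩
  have i1 : Integrable (fun x => G x * ((c - x) * g x)) :=
    (cg_int hgi hg0 c).bdd_mul hG.aestronglyMeasurable bdd
  have i2 : Integrable (fun y => G y * ((c - y) * g (y+δ))) := by
    refine Integrable.bdd_mul ?_ hG.aestronglyMeasurable bdd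
    refine ((cg_int hgi hg0 (c+δ)).comp_add_right δ).congr (ae_of_all _ fun x => ?_)
    simp
  set r := g (c+δ) / g c with hr
  have hrpos : 0 < r := div_pos (hgpos _ ⟨by linarith, hcδ⟩) (hgpos _ ⟨hc, by linarith⟩)
  have e2 : ∫ y, G y * ((c - y) * g (y+δ)) =
      ∫ y, G y * ((c - y) * (g (y+δ) - r * g y)) := by
    have : ∫ y, (G y * ((c - y) * g (y+δ)) - r * (G y * ((c - y) * g y))) =
        ∫ y, G y * ((c - y) * g (y+δ)) := by
      rw [integral_sub i2 (i1.const_mul r), integral_const_mul, h0]; simp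
    rw [← this]
    refine integral_congr_ae (ae_of_all _ fun x => ?_)
    simp only; ring
  have i3 : Integrable (fun y => G y * ((c - y) * (g (y+δ) - r * g y))) := by
    refine (i2.sub (i1.const_mul r)).congr (ae_of_all _ fun x => ?_)
    simp only [Pi.sub_apply]; ring
  have nn : ∀ y, 0 ≤ G y * ((c - y) * (g (y+δ) - r * g y)) := fun y =>
    mul_nonneg (hG01 y).1 (shift_pt hgpos hg0 hconc hc hδ hcδ y)
  rw [e1, e2]
  refine ⟨integral_nonneg nn, fun p hp hGp => ?_⟩
  rw [integral_pos_iff_support_of_nonneg nn i3]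
  have hq : max p (1-δ) < 1 := max_lt hp (by linarith)
  refine lt_of_lt_of_le (b := volume (Set.Ioo (max p (1-δ)) 1)) ?_ (measure_mono ?_)
  · rw [Real.volume_Ioo]; simpa using hq
  · intro y hy
    have y1 : p < y := (le_max_left _ _).trans_lt hy.1
    have y2 : 1 - δ < y := (le_max_right _ _).trans_lt hy.1
    have g1 : g (y+δ) = 0 := hg0 _ (fun h => by linarith [h.2])
    have g2 : 0 < g y := hgpos y ⟨by linarith, hy.2⟩
    simp only [Function.mem_support, g1]
    refine mul_ne_zero (hGp y y1).ne' (mul_ne_zero (by linarith) ?_)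
    have := mul_pos hrpos g2
    linarith
end shift

section uniq
variable {μ : Measure ℝ} [IsProbabilityMeasure μ] {g : ℝ → ℝ} (hg : Measurable g)
  (hgpos : ∀ x ∈ Set.Ioo (0:ℝ) 1, 0 < g x) (hg0 : ∀ x ∉ Set.Ioo (0:ℝ) 1, g x = 0)
  (hd : μ = volume.withDensity fun x => ENNReal.ofReal (g x))
  (hconc : ConcaveOn ℝ (Set.Ioo (0:ℝ) 1) (fun x => Real.log (g x)))
  {Λ : ℕ → ℝ} (hr : ∀ k, Λ k ∈ Set.Icc (0 : ℝ) 1) (hΛ : Antitone Λ) (hΛ0 : Λ 0 = 1)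
include hg hgpos hg0 hd hr

lemma hrel (n : ℕ) (M : ℕ → ℝ) (i : ℕ) :
    ∫ x, Λ (Nat.dist i (Nc n M x)) * ((M i - x) * g x) = M i - ∫ x, vv Λ n M i x ∂μ := by
  have h1 : ∫ x, (M i - vv Λ n M i x) ∂μ = M i - ∫ x, vv Λ n M i x ∂μ := by
    rw [integral_sub (integrable_const _) (vv_int hg hgpos hg0 hd hr n M i)]
    simp
  rw [← h1, int_mu hg hgpos hg0 hd]
  refine integral_congr_ae (ae_of_all _ fun x => ?_)
  simp only [vv]; ring

include hΛ hΛ0 hconc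

lemma fix_unique {n : ℕ} (hn : 2 ≤ n) {M M' : ℕ → ℝ} (hM : Monotone M) (hM' : Monotone M')
    (hM01 : ∀ i, M i ∈ Set.Icc (0:ℝ) 1) (hM01' : ∀ i, M' i ∈ Set.Icc (0:ℝ) 1)
    (hfix : ∀ i < n, ∫ x, vv Λ n M i x ∂μ = M i) (hfix' : ∀ i < n, ∫ x, vv Λ n M' i x ∂μ = M' i)
    (ht : ∀ i, M i = M (min i (n-1))) (ht' : ∀ i, M' i = M' (min i (n-1)))
    {k₀ : ℕ} (hk : 2 * k₀ + 1 < n) (hk0 : Λ (k₀+1) < Λ k₀) (hle : M ≤ M') : M = M' := by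
  have hp := fix_pos hg hgpos hg0 hd hr hΛ0 hM hM01 hfix
  have hl := fix_lt hg hgpos hg0 hd hr hΛ0 hM hM01 hfix
  have hp' := fix_pos hg hgpos hg0 hd hr hΛ0 hM' hM01' hfix'
  have hl' := fix_lt hg hgpos hg0 hd hr hΛ0 hM' hM01' hfix'
  have hst' := fix_strict hg hgpos hg0 hd hr hΛ hΛ0 hM' hM01' hfix' hk hk0
  obtain ⟨i₀, hi₀, hmax⟩ := (Finset.range n).exists_max_image (fun i => M' i - M i)
    ⟨0, by simp; omega⟩
  simp only [Finset.mem_range] at hi₀ hmax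
  set δ := M' i₀ - M i₀ with hδ
  have hmaxall : ∀ j, M' j ≤ M j + δ := fun j => by
    have := hmax (min j (n-1)) (by omega)
    rw [ht j, ht' j]; linarith
  by_cases hδ0 : δ ≤ 0
  · funext j
    exact le_antisymm (hle j) (by linarith [hmaxall j])
  push Not at hδ0
  exfalso
  let S := (Finset.range n).filter (fun k => M' k = M k + δ)
  have hS : S.Nonempty := ⟨i₀, by simp [S, hi₀, hδ]⟩
  obtain ⟨i, hiS, himax⟩ := S.exists_max_image id hS
  simp only [S, Finset.mem_filter, Finset.mem_range, id] at hiS himax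
  obtain ⟨hi, hei⟩ := hiS
  set D : ℕ → ℝ := fun k => M k + δ with hD
  have hDm : Monotone D := fun a b hab => by
    have := hM hab
    simp only [hD]; linarith
  have hDle : M' ≤ D := hmaxall
  -- shift
  have hgi := g_int hg hgpos hg0 hd
  have r0 := hrel hg hgpos hg0 hd hr n M i
  rw [hfix i hi, sub_self] at r0
  have r1 := hrel hg hgpos hg0 hd hr n D i
  have r2 := hrel hg hgpos hg0 hd hr n M' i
  rw [hfix' i hi, sub_self] at r2
  have hsh := shift_int hgi hgpos hg0 hconc (c := M i) (δ := δ) (hp i hi) hδ0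
    (by rw [← hei]; exact hl' i hi) (measurable_LN Λ n M i) (fun x => hr _) r0
  have e : ∫ x, Λ (Nat.dist i (Nc n M (x - δ))) * ((M i + δ - x) * g x) = 
      D i - ∫ x, vv Λ n D i x ∂μ := by
    rw [← r1]
    refine integral_congr_ae (ae_of_all _ fun x => ?_)
    simp only [hD, Nc_shift]
  simp only [e] at hsh
  have hDi : D i = M' i := hei.symm
  have hle2 : ∫ x, vv Λ n M' i x ∂μ ≤ ∫ x, vv Λ n D i x ∂μ :=
    integral_mono (vv_int hg hgpos hg0 hd hr n M' i) (vv_int hg hgpos hg0 hd hr n D i)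
      (fun x => vv_mono hΛ hr hM' hDm hDle hi x)
  rw [hfix' i hi] at hle2
  by_cases hcase : i + k₀ + 1 < n
  · set j := i + k₀ + 1 with hj
    have hjS : M' j < D j := lt_of_le_of_ne (hmaxall j) (fun h => by
      have := himax j ⟨hcase, h⟩
      omega)
    have hj1 : M' (j-1) ≤ D (j-1) := hmaxall _
    have hs1 := hst' (j-1) (by omega)
    rw [show j - 1 + 1 = j by omega] at hs1
    have hs2 := hM' (show i ≤ j - 1 by omega)
    have := int_lt hg hgpos hg0 hd (w := vv Λ n M' i) (w' := vv Λ n D i)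
      (vv_int hg hgpos hg0 hd hr n M' i) (vv_int hg hgpos hg0 hd hr n D i)
      (fun x _ => vv_mono hΛ hr hM' hDm hDle hi x)
      (p := (M' (j-1) + M' j)/2) (q := min 1 ((D (j-1) + D j)/2))
      (by linarith [(hM01' (j-1)).1, (hM01' j).1])
      (lt_min (by linarith [hl' j hcase, hl' (j-1) (by omega)]) (by linarith))
      (min_le_left _ _) ?_
    · rw [hfix' i hi] at this
      linarith [hsh.1]
    · intro x hx
      have x2 : x < (D (j-1) + D j)/2 := hx.2.trans_le (min_le_right _ _)
      have xi : M' i < x := by linarith [hx.1]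
      have n1 : j ≤ Nc n M' x := le_Nc hM' hcase (fun _ => hx.1)
      have n2 : Nc n D x ≤ j - 1 := Nc_le hDm (fun _ => by
        rw [show j - 1 + 1 = j by omega]; exact x2.le)
      have n3 : i ≤ Nc n D x := le_Nc_of_lt hDm hi (by rw [hDi]; exact xi)
      have l1 : Λ (Nat.dist i (Nc n M' x)) ≤ Λ (k₀+1) := hΛ (by unfold Nat.dist; omega)
      have l2 : Λ k₀ ≤ Λ (Nat.dist i (Nc n D x)) := hΛ (by unfold Nat.dist; omega)
      simp only [vv, hDi]
      have : Λ (Nat.dist i (Nc n M' x)) < Λ (Nat.dist i (Nc n D x)) := by linarith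
      have := mul_lt_mul_of_pos_right this (show 0 < x - M' i by linarith)
      linarith
  · have := hsh.2 (M (n-1)) (hl _ (by omega)) (fun x hx => by
      have n1 : n - 1 ≤ Nc n M x := le_Nc_of_lt hM (by omega) hx
      have n2 : Nc n M x ≤ n - 1 := Nc_le hM (fun h => by omega)
      have l2 : Λ k₀ ≤ Λ (Nat.dist i (Nc n M x)) := hΛ (by unfold Nat.dist; omega)
      linarith [(hr (k₀+1)).1])
    linarith
end uniq

lemma somBnd_eq {n : ℕ} (m : Fin n → ℝ) (M : ℕ → ℝ) (hm : ∀ i : Fin n, m i = M i) {k : ℕ}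
    (h1 : 1 ≤ k) (h2 : k < n) : somBnd m k = (M (k-1) + M k)/2 := by
  unfold somBnd
  rw [if_neg (by omega), dif_pos h2, hm, hm]

lemma meanField_eq {n : ℕ} (hn : 2 ≤ n) (Λ : ℕ → ℝ) (hr : ∀ k, Λ k ∈ Set.Icc (0 : ℝ) 1)
    {f g : ℝ → ℝ} (hgi : Integrable g) (hg0 : ∀ x ∉ Set.Ioo (0:ℝ) 1, g x = 0)
    (hfg : f =ᵐ[volume] g)
    (m : Fin n → ℝ) (M : ℕ → ℝ) (hm : ∀ i : Fin n, m i = M i) (hM : Monotone M)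
    (hM01 : ∀ i, M i ∈ Set.Icc (0:ℝ) 1) (i : Fin n) :
    meanField Λ f m i = ∫ x, Λ (Nat.dist i (Nc n M x)) * ((M i - x) * g x) := by
  have hb := fun {k : ℕ} => somBnd_eq m M hm (k := k)
  have b0 : somBnd m 0 = 0 := by simp [somBnd]
  have bn : somBnd m n = 1 := by simp [somBnd]; omega
  have mono : ∀ k < n, somBnd m k ≤ somBnd m (k+1) := by
    intro k hk
    have m1 := hM (show k - 1 ≤ k by omega)
    have m2 := hM (show k ≤ k + 1 by omega)
    have m0 := hM01 (k-1)
    have m3 := hM01 (k+1)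
    have m4 := hM01 k
    by_cases a : k = 0
    · subst a
      rw [b0, hb le_rfl (by omega)]
      simp only [Nat.sub_self, zero_add] at *
      linarith [m3.1, m4.1]
    · by_cases b : k + 1 = n
      · rw [b, bn, hb (by omega) hk]
        linarith [m0.2, m4.2]
      · rw [hb (by omega) hk, hb (by omega) (by omega)]
        simp only [Nat.add_sub_cancel]
        linarith
  set φ : ℝ → ℝ := fun x => Λ (Nat.dist i (Nc n M x)) * ((M i - x) * g x) with hφ
  have iφ : Integrable φ := by
    refine (cg_int hgi hg0 (M i)).bdd_mul (c := 1) (measurable_LN Λ n M i).aestronglyMeasurable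
      (ae_of_all _ fun x => ?_)
    have := hr (Nat.dist i (Nc n M x))
    rw [Real.norm_eq_abs, abs_le]
    exact ⟨by linarith [this.1], this.2⟩
  have cell : ∀ k < n, Λ (Nat.dist i k) *
      ∫ x in Set.Icc (somBnd m k) (somBnd m (k + 1)), (m i - x) * f x =
      ∫ x in (somBnd m k)..(somBnd m (k+1)), φ x := by
    intro k hk
    rw [intervalIntegral.integral_of_le (mono k hk), integral_Icc_eq_integral_Ioc,
      ← integral_const_mul]
    refine integral_congr_ae ?_
    filter_upwards [ae_restrict_of_ae hfg, ae_restrict_mem measurableSet_Ioc] with x hx hx2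
    have h3 : Nc n M x = k := le_antisymm
      (Nc_le hM (fun h => by
        have := hx2.2
        rw [hb (by omega) h] at this
        simpa using this))
      (le_Nc hM hk (fun h => by
        have := hx2.1
        rwa [hb h hk] at this))
    simp only [hφ, h3, hx, hm]
  unfold meanField
  rw [Finset.sum_congr rfl (fun (j : Fin n) _ => cell j.1 j.2),
    Fin.sum_univ_eq_sum_range (fun k => ∫ x in (somBnd m k)..(somBnd m (k+1)), φ x) n,
    intervalIntegral.sum_integral_adjacent_intervals (fun k _ => iφ.intervalIntegrable), b0, bn,
    intervalIntegral.integral_of_le zero_le_one, setIntegral_eq_integral_of_forall_compl_eq_zero]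
  intro x hx
  simp only [hφ]
  rw [hg0 x (fun h => hx ⟨h.1, h.2.le⟩)]
  simp

lemma kt {X : Type*} [CompleteLattice X] (T : X → X) (hT : Monotone T) :
    ∃ L, T L = L ∧ ∀ M, T M = M → L ≤ M :=
  let F : X →o X := ⟨T, hT⟩
  ⟨F.lfp, F.map_lfp, fun _ h => F.lfp_le_fixed h⟩

/-- Under `H_Λ` and `H_μ`, the mean field `h` of the
one-dimensional SOM algorithm has a unique zero `m★` in `F_n^+`. -/
theorem som_meanField_unique_zero {n : ℕ} (hn : 2 ≤ n)
    (Λ : ℕ → ℝ) (hΛanti : Antitone Λ) (hΛ0 : Λ 0 = 1)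
    (hΛrange : ∀ k, Λ k ∈ Set.Icc (0 : ℝ) 1) (hHΛ : HLambda n Λ)
    (μ : Measure ℝ) [IsProbabilityMeasure μ] (f : ℝ → ℝ)
    (hdens : μ = volume.withDensity fun x => ENNReal.ofReal (f x))
    (hsupp : ∀ x, x ∉ Set.Icc (0 : ℝ) 1 → f x = 0)
    (hHμ : Hmu f) :
    ∃! m : Fin n → ℝ, m ∈ Fplus n ∧ meanField Λ f m = 0 := by
  obtain ⟨k₀, hk, hk0⟩ := hHΛ
  obtain ⟨hfpos, hor⟩ := hHμ
  have hfc : ConcaveOn ℝ (Set.Ioo (0 : ℝ) 1) (fun x => Real.log (f x)) := by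
    rcases hor with h | h
    · exact h.concaveOn
    · exact h.1
  set g : ℝ → ℝ := (Set.Ioo (0:ℝ) 1).indicator f with hgdef
  have hgf : ∀ x ∈ Set.Ioo (0:ℝ) 1, g x = f x := fun x hx => Set.indicator_of_mem hx f
  have hg0 : ∀ x ∉ Set.Ioo (0:ℝ) 1, g x = 0 := fun x hx => Set.indicator_of_notMem hx f
  have hgpos : ∀ x ∈ Set.Ioo (0:ℝ) 1, 0 < g x := fun x hx => by rw [hgf x hx]; exact hfpos x hx
  have hconc : ConcaveOn ℝ (Set.Ioo (0 : ℝ) 1) (fun x => Real.log (g x)) :=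
    hfc.congr (fun x hx => by simp only [hgf x hx])
  have hcont : ContinuousOn f (Set.Ioo (0:ℝ) 1) := by
    have := (hfc.continuousOn isOpen_Ioo).rexp
    refine this.congr (fun x hx => ?_)
    simp only [Real.exp_log (hfpos x hx)]
  have hg : Measurable g := by
    rw [hgdef, ← Set.piecewise_eq_indicator]
    exact hcont.measurable_piecewise continuousOn_const measurableSet_Ioo
  have hfg : f =ᵐ[volume] g := by
    have h0 : ∀ᵐ x : ℝ, x ≠ 0 := Measure.ae_ne volume 0
    have h1 : ∀ᵐ x : ℝ, x ≠ 1 := Measure.ae_ne volume 1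
    filter_upwards [h0, h1] with x hx0 hx1
    by_cases h : x ∈ Set.Ioo (0:ℝ) 1
    · exact (hgf x h).symm
    · rw [hg0 x h]
      refine hsupp x (fun h' => h ⟨lt_of_le_of_ne h'.1 (Ne.symm hx0), lt_of_le_of_ne h'.2 hx1⟩)
  have hd : μ = volume.withDensity fun x => ENNReal.ofReal (g x) := by
    rw [hdens]
    refine withDensity_congr_ae ?_
    filter_upwards [hfg] with x hx
    rw [hx]
  have hgi := g_int hg hgpos hg0 hd
  have : Fact ((0:ℝ) ≤ 1) := ⟨zero_le_one⟩
  have vint := fun M i => vv_int hg hgpos hg0 hd hΛrange n M i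
  have aem := ae_mem hg hgpos hg0 hd
  let E := ℕ →o Set.Icc (0:ℝ) 1
  let c : E → ℕ → ℝ := fun M i => (M i : ℝ)
  have cmono : ∀ M : E, Monotone (c M) := fun M a b h => M.monotone h
  have c01 : ∀ (M : E) i, c M i ∈ Set.Icc (0:ℝ) 1 := fun M i => (M i).2
  have hmem : ∀ (M : E) (i : ℕ), ∫ x, vv Λ n (c M) i x ∂μ ∈ Set.Icc (0:ℝ) 1 := by
    intro M i
    constructor
    · refine integral_nonneg_of_ae ?_
      filter_upwards [aem] with x hx
      exact (le_min (c01 M i).1 hx.1.le).trans (min_le_vv hΛrange i x)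
    · have : ∫ x, vv Λ n (c M) i x ∂μ ≤ ∫ x, (1:ℝ) ∂μ := by
        refine integral_mono_ae (vint _ _) (integrable_const _) ?_
        filter_upwards [aem] with x hx
        exact (vv_le_max hΛrange i x).trans (max_le (c01 M i).2 hx.2.le)
      simpa using this
  let T : E →o E :=
    { toFun := fun M =>
        { toFun := fun i => ⟨∫ x, vv Λ n (c M) (min i (n-1)) x ∂μ, hmem M _⟩
          monotone' := fun a b hab => by
            refine Subtype.mk_le_mk.2 (integral_mono (vint _ _) (vint _ _) (fun x => ?_))
            exact vv_ord hΛanti hΛrange (cmono M) (by omega) (by omega) x }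
      monotone' := fun M M' h i => by
        refine Subtype.mk_le_mk.2 (integral_mono (vint _ _) (vint _ _) (fun x => ?_))
        exact vv_mono hΛanti hΛrange (cmono M) (cmono M') (fun k => h k) (by omega) x }
  have hT : ∀ M : E, T M = M → (∀ i, c M i = ∫ x, vv Λ n (c M) (min i (n-1)) x ∂μ) := by
    intro M h i
    have := congrArg (fun N : E => ((N i : Set.Icc (0:ℝ) 1) : ℝ)) h
    exact this.symm
  have hT1 : ∀ M : E, T M = M → ∀ i < n, ∫ x, vv Λ n (c M) i x ∂μ = c M i := by
    intro M h i hi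
    rw [hT M h i, show min i (n-1) = i by omega]
  have hT2 : ∀ M : E, T M = M → ∀ i, c M i = c M (min i (n-1)) := by
    intro M h i
    rw [hT M h i, hT M h (min i (n-1)), min_assoc, min_self]
  have huniq : ∀ M M' : E, T M = M → T M' = M' → M ≤ M' → c M = c M' := by
    intro M M' h h' hle
    exact fix_unique hg hgpos hg0 hd hconc hΛrange hΛanti hΛ0 hn (cmono M) (cmono M') (c01 M)
      (c01 M') (hT1 M h) (hT1 M' h') (hT2 M h) (hT2 M' h') hk hk0 (fun k => hle k)
  obtain ⟨L, hLfix, hLle⟩ := kt (X := E) T T.monotone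
  have hlt := fix_strict hg hgpos hg0 hd hΛrange hΛanti hΛ0 (cmono L) (c01 L) (hT1 L hLfix) hk hk0
  refine ⟨fun i => c L i, ⟨⟨?_, ?_⟩, ?_⟩, ?_⟩
  · intro a b hab
    have h1 := hlt a.1 (by have := b.2; omega)
    have h2 := cmono L (show a.1 + 1 ≤ b.1 from hab)
    exact h1.trans_le h2
  · intro i
    exact ⟨fix_pos hg hgpos hg0 hd hΛrange hΛ0 (cmono L) (c01 L) (hT1 L hLfix) i i.2,
      fix_lt hg hgpos hg0 hd hΛrange hΛ0 (cmono L) (c01 L) (hT1 L hLfix) i i.2⟩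
  · funext i
    rw [meanField_eq hn Λ hΛrange hgi hg0 hfg _ (c L) (fun _ => rfl) (cmono L) (c01 L) i,
      hrel hg hgpos hg0 hd hΛrange, hT1 L hLfix i i.2]
    simp
  · rintro m ⟨⟨hms, hm01⟩, hmz⟩
    let M : E :=
      { toFun := fun i => ⟨m ⟨min i (n-1), by omega⟩, (hm01 _).1.le, (hm01 _).2.le⟩
        monotone' := fun a b hab => by
          refine Subtype.mk_le_mk.2 (hms.monotone ?_)
          simp only [Fin.mk_le_mk]
          omega }
    have hmM : ∀ i : Fin n, m i = c M i := by
      intro i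
      simp only [c, M, OrderHom.coe_mk]
      congr 1
      apply Fin.ext
      have := i.2
      simp only
      omega
    have hfixM : ∀ i < n, ∫ x, vv Λ n (c M) i x ∂μ = c M i := by
      intro i hi
      have h1 := congrFun hmz ⟨i, hi⟩
      rw [meanField_eq hn Λ hΛrange hgi hg0 hfg _ (c M) hmM (cmono M) (c01 M) ⟨i, hi⟩,
        hrel hg hgpos hg0 hd hΛrange] at h1
      simp only [Pi.zero_apply] at h1
      linarith
    have hTM : T M = M := by
      apply OrderHom.ext
      funext i
      apply Subtype.ext
      change ∫ x, vv Λ n (c M) (min i (n-1)) x ∂μ = c M i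
      rw [hfixM _ (by omega)]
      change m ⟨min (min i (n-1)) (n-1), _⟩ = m ⟨min i (n-1), _⟩
      congr 1
      apply Fin.ext
      simp only
      omega
    have := huniq L M hLfix hTM (hLle M hTM)
    funext i
    rw [hmM i, this]

end
end

section
/- Let n ≥ 2, let Λ : ℕ → [0,1] be nonincreasing with Λ(0) = 1, and let μ be a probability measure on [0,1] whose density f is positive and continuous on (0,1). Then the mean field h of the one-dimensional SOM algorithm is continuously differentiable on F_n^+ and the dynamical system dm/dt = −h(m) is cooperative on F_n^+: for every m ∈ F_n^+ and all indices i ≠ j, the off-diagonal entry ∂h_i/∂m_j(m) of the Jacobian ∇h(m) is nonpositive. -/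
open MeasureTheory Set Filter Topology
open scoped Classical ENNReal

noncomputable section

lemma som_isOpen (n : ℕ) : IsOpen (Fplus n) := by
  have : Fplus n = (⋂ i : Fin n, ⋂ j : Fin n, ⋂ _ : i < j, {m : Fin n → ℝ | m i < m j}) ∩
      ⋂ i : Fin n, {m : Fin n → ℝ | m i ∈ Set.Ioo (0:ℝ) 1} := by
    ext m
    simp [Fplus, StrictMono]
  rw [this]
  refine IsOpen.inter ?_ ?_
  · refine isOpen_iInter_of_finite fun i => isOpen_iInter_of_finite fun j =>
      isOpen_iInter_of_finite fun _ => isOpen_lt (continuous_apply i) (continuous_apply j)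
  · exact isOpen_iInter_of_finite fun i => isOpen_Ioo.preimage (continuous_apply i)

lemma som_bnd_mem {n : ℕ} {m : Fin n → ℝ} (hm : m ∈ Fplus n) {k : ℕ} (h0 : k ≠ 0) (h : k < n) :
    somBnd m k ∈ Set.Ioo (0:ℝ) 1 := by
  have h1 := hm.2 ⟨k - 1, by omega⟩
  have h2 := hm.2 ⟨k, h⟩
  simp only [somBnd, h0, h, if_false, dif_pos]
  constructor <;> linarith [h1.1, h1.2, h2.1, h2.2]

lemma som_bnd_lt {n : ℕ} {m : Fin n → ℝ} (hm : m ∈ Fplus n) (i : Fin n) {k : ℕ} (h0 : k ≠ 0)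
    (h : k < n) (hki : k ≤ i.1) : somBnd m k ≤ m i := by
  have h1 : m ⟨k - 1, by omega⟩ ≤ m i := hm.1.monotone (by simp [Fin.le_def]; omega)
  have h2 : m ⟨k, h⟩ ≤ m i := hm.1.monotone (by simpa [Fin.le_def] using hki)
  simp only [somBnd, h0, h, if_false, dif_pos]
  linarith

lemma som_lt_bnd {n : ℕ} {m : Fin n → ℝ} (hm : m ∈ Fplus n) (i : Fin n) {k : ℕ} (h0 : k ≠ 0)
    (h : k < n) (hki : i.1 < k) : m i ≤ somBnd m k := by
  have h1 : m i ≤ m ⟨k - 1, by omega⟩ := hm.1.monotone (by simp [Fin.le_def]; omega)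
  have h2 : m i ≤ m ⟨k, h⟩ := hm.1.monotone (by simp [Fin.le_def]; omega)
  simp only [somBnd, h0, h, if_false, dif_pos]
  linarith

lemma som_bnd_mono {n : ℕ} {m : Fin n → ℝ} (hm : m ∈ Fplus n) (j : Fin n) :
    somBnd m j.1 ≤ somBnd m (j.1 + 1) := by
  have hj := hm.2 j
  refine le_trans (b := m j) ?_ ?_
  · by_cases h0 : j.1 = 0
    · simp [somBnd, h0, hj.1.le]
    · exact som_bnd_lt hm j h0 j.2 le_rfl
  · by_cases h0 : j.1 + 1 < n
    · exact som_lt_bnd hm j (by omega) h0 (by omega)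
    · simp [somBnd, h0, hj.2.le]

lemma som_integrable (μ : Measure ℝ) [IsProbabilityMeasure μ] (f : ℝ → ℝ)
    (hdens : μ = volume.withDensity fun x => ENNReal.ofReal (f x))
    (hsupp : ∀ x, x ∉ Set.Icc (0 : ℝ) 1 → f x = 0)
    (hfpos : ∀ x ∈ Set.Ioo (0 : ℝ) 1, 0 < f x)
    (hfcont : ContinuousOn f (Set.Ioo (0 : ℝ) 1)) : Integrable f := by
  have h1 : IntegrableOn f (Set.Ioo 0 1) := by
    refine ⟨hfcont.aestronglyMeasurable measurableSet_Ioo, ?_⟩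
    rw [hasFiniteIntegral_iff_ofReal]
    · have : ∫⁻ x, ENNReal.ofReal (f x) = 1 := by
        have := measure_univ (μ := μ)
        rwa [hdens, withDensity_apply _ MeasurableSet.univ, Measure.restrict_univ] at this
      calc _ ≤ ∫⁻ x, ENNReal.ofReal (f x) := setLIntegral_le_lintegral _ _
        _ = 1 := this
        _ < ⊤ := ENNReal.one_lt_top
    · filter_upwards [ae_restrict_mem measurableSet_Ioo] with x hx using (hfpos x hx).le
  have h2 : IntegrableOn f (Set.Icc 0 1) := by
    rw [integrableOn_Icc_iff_integrableOn_Ioo]; exact h1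
  refine (integrableOn_iff_integrable_of_support_subset ?_).1 h2
  intro x hx
  by_contra hc
  exact hx (hsupp x hc)

lemma som_hasDeriv (g : ℝ → ℝ) (hg : ∀ a b, IntervalIntegrable g volume a b)
    (hc : ContinuousOn g (Set.Ioo (0 : ℝ) 1)) {t : ℝ} (ht : t ∈ Set.Ioo (0:ℝ) 1) :
    HasDerivAt (fun u => ∫ x in (0:ℝ)..u, g x) (g t) t :=
  intervalIntegral.integral_hasDerivAt_right (hg _ _)
    (hc.stronglyMeasurableAtFilter isOpen_Ioo t ht) (hc.continuousAt (isOpen_Ioo.mem_nhds ht))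

lemma som_contDiff (g : ℝ → ℝ) (hg : ∀ a b, IntervalIntegrable g volume a b)
    (hc : ContinuousOn g (Set.Ioo (0 : ℝ) 1)) :
    ContDiffOn ℝ 1 (fun u => ∫ x in (0:ℝ)..u, g x) (Set.Ioo 0 1) := by
  have : (1 : WithTop ℕ∞) = 0 + 1 := by simp
  rw [this, contDiffOn_succ_iff_deriv_of_isOpen isOpen_Ioo]
  refine ⟨fun t ht => (som_hasDeriv g hg hc ht).differentiableAt.differentiableWithinAt,
    by simp, ?_⟩
  rw [contDiffOn_zero]
  exact hc.congr fun t ht => (som_hasDeriv g hg hc ht).deriv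

lemma som_contDiff_bnd {n : ℕ} (F : ℝ → ℝ) (hF : ContDiffOn ℝ 1 F (Set.Ioo 0 1)) (k : ℕ) :
    ContDiffOn ℝ 1 (fun m : Fin n → ℝ => F (somBnd m k)) (Fplus n) := by
  by_cases h0 : k = 0
  · simp only [somBnd, h0, if_true]; exact contDiffOn_const
  by_cases h : k < n
  · refine hF.comp (t := Set.Ioo 0 1) (f := fun m : Fin n → ℝ => somBnd m k) ?_
      (fun m hm => som_bnd_mem hm h0 h)
    simp only [somBnd, h0, h, if_false, dif_pos]
    exact (((contDiff_apply ℝ ℝ _).add (contDiff_apply ℝ ℝ _)).div_const 2).contDiffOn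
  · simp only [somBnd, h0, h, if_false, dif_neg, not_false_eq_true]; exact contDiffOn_const

lemma som_meanField_eq {n : ℕ} (Λ : ℕ → ℝ) (f : ℝ → ℝ)
    (hf : ∀ a b, IntervalIntegrable f volume a b)
    (hf' : ∀ a b, IntervalIntegrable (fun x => x * f x) volume a b)
    (m : Fin n → ℝ) (hm : m ∈ Fplus n) (i : Fin n) :
    meanField Λ f m i = ∑ j : Fin n, Λ (Nat.dist i.1 j.1) *
      ((m i * (∫ x in (0:ℝ)..somBnd m (j.1+1), f x) - ∫ x in (0:ℝ)..somBnd m (j.1+1), x * f x)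
      - (m i * (∫ x in (0:ℝ)..somBnd m j.1, f x) - ∫ x in (0:ℝ)..somBnd m j.1, x * f x)) := by
  unfold meanField
  refine Finset.sum_congr rfl fun j _ => ?_
  congr 1
  rw [integral_Icc_eq_integral_Ioc, ← intervalIntegral.integral_of_le (som_bnd_mono hm j)]
  have : ∀ x, (m i - x) * f x = m i * f x - x * f x := fun x => by ring
  simp only [this]
  rw [intervalIntegral.integral_sub ((hf _ _).const_mul _) (hf' _ _),
    intervalIntegral.integral_const_mul,
    ← intervalIntegral.integral_interval_sub_left (hf 0 _) (hf 0 _),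
    ← intervalIntegral.integral_interval_sub_left (hf' 0 _) (hf' 0 _)]
  ring

/-- directional derivative of the boundary point -/
def somDel {n : ℕ} (v : Fin n → ℝ) (k : ℕ) : ℝ :=
  if k = 0 then 0
  else if h : k < n then
    (v ⟨k - 1, lt_of_le_of_lt (Nat.sub_le k 1) h⟩ + v ⟨k, h⟩) / 2
  else 0

lemma som_bnd_add {n : ℕ} (m v : Fin n → ℝ) (k : ℕ) (t : ℝ) :
    somBnd (m + t • v) k = somBnd m k + t * somDel v k := by
  unfold somBnd somDel
  split_ifs
  · simp
  · simp; ring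
  · simp

lemma som_hasDeriv_bnd {n : ℕ} (m : Fin n → ℝ) (hm : m ∈ Fplus n) (v : Fin n → ℝ)
    (g : ℝ → ℝ) (hg : ∀ a b, IntervalIntegrable g volume a b)
    (hc : ContinuousOn g (Set.Ioo (0 : ℝ) 1)) (k : ℕ) :
    HasDerivAt (fun t : ℝ => ∫ x in (0:ℝ)..somBnd (m + t • v) k, g x)
      (g (somBnd m k) * somDel v k) 0 := by
  simp only [som_bnd_add]
  by_cases hk : k ≠ 0 ∧ k < n
  · have h1 : HasDerivAt (fun t : ℝ => somBnd m k + t * somDel v k) (somDel v k) 0 := by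
      simpa using ((hasDerivAt_id (0:ℝ)).mul_const (somDel v k)).const_add (somBnd m k)
    have h2 := som_hasDeriv g hg hc (som_bnd_mem hm hk.1 hk.2)
    exact HasDerivAt.comp (0:ℝ) (h₂ := fun u => ∫ x in (0:ℝ)..u, g x) (by simpa using h2) h1
  · have : somDel v k = 0 := by
      unfold somDel
      split_ifs with h1 h2
      · rfl
      · exact absurd ⟨h1, h2⟩ hk
      · rfl
    simp only [this, mul_zero]
    exact hasDerivAt_const _ _

lemma som_sum_nonpos (n : ℕ) (a g : ℕ → ℝ) (h0 : g 0 = 0) (hn : g n = 0)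
    (h : ∀ k < n, (a k - a (k+1)) * g (k+1) ≤ 0) :
    ∑ k ∈ Finset.range n, a k * (g (k+1) - g k) ≤ 0 := by
  have e : ∀ k, a k * (g (k+1) - g k) =
    (a (k+1) * g (k+1) - a k * g k) + (a k - a (k+1)) * g (k+1) := fun k => by ring
  simp only [e]
  rw [Finset.sum_add_distrib, Finset.sum_range_sub (fun k => a k * g k), h0, hn]
  have := Finset.sum_nonpos (s := Finset.range n) (fun k hk => h k (Finset.mem_range.1 hk))
  linarith

/-- If the density `f` is positive and continuous on `(0,1)`,
then the mean field `h` is `C¹` on `F_n^+` and the system `dm/dt = -h(m)` is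
cooperative there: all off-diagonal entries `∂h_i/∂m_j` (`i ≠ j`) of the
Jacobian of `h` are nonpositive. -/
theorem som_meanField_cooperative {n : ℕ} (hn : 2 ≤ n)
    (Λ : ℕ → ℝ) (hΛanti : Antitone Λ) (hΛ0 : Λ 0 = 1)
    (hΛrange : ∀ k, Λ k ∈ Set.Icc (0 : ℝ) 1)
    (μ : Measure ℝ) [IsProbabilityMeasure μ] (f : ℝ → ℝ)
    (hdens : μ = volume.withDensity fun x => ENNReal.ofReal (f x))
    (hsupp : ∀ x, x ∉ Set.Icc (0 : ℝ) 1 → f x = 0)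
    (hfpos : ∀ x ∈ Set.Ioo (0 : ℝ) 1, 0 < f x)
    (hfcont : ContinuousOn f (Set.Ioo (0 : ℝ) 1)) :
    ContDiffOn ℝ 1 (meanField Λ f) (Fplus n) ∧
    ∀ m ∈ Fplus n, ∀ i j : Fin n, i ≠ j →
      fderiv ℝ (fun m' => meanField Λ f m' i) m (Pi.single j 1) ≤ 0 := by
  have hint := som_integrable μ f hdens hsupp hfpos hfcont
  have hf : ∀ a b, IntervalIntegrable f volume a b := fun a b => hint.intervalIntegrable
  have hf' : ∀ a b, IntervalIntegrable (fun x => x * f x) volume a b := fun a b =>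
    (hf a b).continuousOn_mul continuousOn_id
  have hc' : ContinuousOn (fun x => x * f x) (Set.Ioo (0:ℝ) 1) := continuousOn_id.mul hfcont
  have hCD : ContDiffOn ℝ 1 (meanField Λ f) (Fplus n) := by
    rw [contDiffOn_pi]
    intro i
    refine ContDiffOn.congr ?_ (fun m hm => som_meanField_eq Λ f hf hf' m hm i)
    have hi : ContDiffOn ℝ 1 (fun m : Fin n → ℝ => m i) (Fplus n) :=
      (contDiff_apply ℝ ℝ i).contDiffOn
    have hH : ∀ k, ContDiffOn ℝ 1 (fun m : Fin n → ℝ =>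
        m i * (∫ x in (0:ℝ)..somBnd m k, f x) - ∫ x in (0:ℝ)..somBnd m k, x * f x) (Fplus n) :=
      fun k => (hi.mul (som_contDiff_bnd _ (som_contDiff f hf hfcont) k)).sub
        (som_contDiff_bnd _ (som_contDiff _ hf' hc') k)
    exact ContDiffOn.sum fun j _ => contDiffOn_const.mul ((hH _).sub (hH _))
  refine ⟨hCD, fun m hm i j hij => ?_⟩
  have hnhds : Fplus n ∈ 𝓝 m := (som_isOpen n).mem_nhds hm
  have hdiff : DifferentiableAt ℝ (fun m' => meanField Λ f m' i) m :=
    ((contDiffOn_pi.1 hCD i).contDiffAt hnhds).differentiableAt (by simp)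
  set v : Fin n → ℝ := Pi.single j 1 with hv
  rw [← hdiff.lineDeriv_eq_fderiv, lineDeriv]
  have hvi : v i = 0 := by simp [hv, hij]
  have hvnn : ∀ k, 0 ≤ v k := fun k => by
    rw [hv, Pi.single_apply]; split_ifs <;> norm_num
  have hdel : ∀ k, 0 ≤ somDel v k := fun k => by
    unfold somDel
    split_ifs
    · exact le_rfl
    · have := hvnn ⟨k - 1, by omega⟩
      have := hvnn ⟨k, by omega⟩
      linarith
    · exact le_rfl
  let g : ℕ → ℝ := fun k => (m i - somBnd m k) * f (somBnd m k) * somDel v k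
  have hH : ∀ k, HasDerivAt (fun t : ℝ => (m + t • v) i *
      (∫ x in (0:ℝ)..somBnd (m + t • v) k, f x) - ∫ x in (0:ℝ)..somBnd (m + t • v) k, x * f x)
      (g k) 0 := by
    intro k
    have e : ∀ t : ℝ, (m + t • v) i = m i := fun t => by simp [hvi]
    simp only [e]
    have hg : g k = m i * (f (somBnd m k) * somDel v k)
        - (somBnd m k * f (somBnd m k)) * somDel v k := by
      show (m i - somBnd m k) * f (somBnd m k) * somDel v k = _
      ring
    rw [hg]
    exact ((som_hasDeriv_bnd m hm v f hf hfcont k).const_mul (m i)).sub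
      (som_hasDeriv_bnd m hm v _ hf' hc' k)
  have hD : HasDerivAt (fun t : ℝ => meanField Λ f (m + t • v) i)
      (∑ j : Fin n, Λ (Nat.dist i.1 j.1) * (g (j.1+1) - g j.1)) 0 := by
    refine HasDerivAt.congr_of_eventuallyEq
      (HasDerivAt.fun_sum fun j _ => ((hH (j.1+1)).sub (hH j.1)).const_mul _) ?_
    have hcont : ContinuousAt (fun t : ℝ => m + t • v) 0 := by fun_prop
    have : ∀ᶠ t : ℝ in 𝓝 0, m + t • v ∈ Fplus n := hcont (by simpa using hnhds)
    filter_upwards [this] with t ht using som_meanField_eq Λ f hf hf' _ ht i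
  rw [hD.deriv, Fin.sum_univ_eq_sum_range (fun k => Λ (Nat.dist i.1 k) * (g (k+1) - g k)) n]
  have hgn : g n = 0 := by simp [g, somDel]
  refine som_sum_nonpos n (fun k => Λ (Nat.dist i.1 k)) g (by simp [g, somDel]) hgn ?_
  intro k hk
  by_cases hk1 : k + 1 < n
  · have hfp := (hfpos _ (som_bnd_mem hm (k := k+1) (by omega) hk1)).le
    have hd := hdel (k+1)
    by_cases hki : k + 1 ≤ i.1
    · have h1 := som_bnd_lt hm i (k := k+1) (by omega) hk1 hki
      have h2 : Λ (Nat.dist i.1 k) ≤ Λ (Nat.dist i.1 (k+1)) :=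
        hΛanti (by unfold Nat.dist; omega)
      exact mul_nonpos_of_nonpos_of_nonneg (by simpa using h2)
        (mul_nonneg (mul_nonneg (by linarith) hfp) hd)
    · have h1 := som_lt_bnd hm i (k := k+1) (by omega) hk1 (by omega)
      have h2 : Λ (Nat.dist i.1 (k+1)) ≤ Λ (Nat.dist i.1 k) :=
        hΛanti (by unfold Nat.dist; omega)
      exact mul_nonpos_of_nonneg_of_nonpos (by simpa using h2)
        (mul_nonpos_of_nonpos_of_nonneg
          (mul_nonpos_of_nonpos_of_nonneg (by linarith) hfp) hd)
  · have : k + 1 = n := by omega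
    simp [this, hgn]

end
end
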